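/- arXiv:2107.10219 — 2 statements merged into one kernel-verified Lean document; each statement's English description precedes it below -/
import Mathlib

section
/- Let f : ℝ → ℝ be continuously differentiable such that for every δ > 0 there exists S > 1 with |deriv f s| ≤ δ · (Real.log |s|)^{1/2} whenever |s| ≥ S. Then for every ε > 0 there exists a constant C_ε > 0 such that for all a, b ∈ ℝ, |f(a) − f(b)| ≤ (Real.sqrt ε · (Real.log (1 + |a| + |b|))^{1/2} + C_ε) · |a − b|. -/
/-- If `f ∈ C¹(ℝ)` and `limsup_{|s|→∞} |f'(s)|/(log|s|)^{1/2} = 0`, then for every `ε > 0`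
there is `C_ε > 0` with `|f(a) − f(b)| ≤ (√ε (log(1+|a|+|b|))^{1/2} + C_ε)|a − b|`. -/
theorem stmt_10 (f : ℝ → ℝ) (hf : ContDiff ℝ 1 f)
    (h : ∀ δ : ℝ, 0 < δ → ∃ S : ℝ, 1 < S ∧
      ∀ s : ℝ, S ≤ |s| → |deriv f s| ≤ δ * (Real.log |s|) ^ ((1 : ℝ) / 2)) :
    ∀ ε : ℝ, 0 < ε → ∃ C : ℝ, 0 < C ∧
      ∀ a b : ℝ,
        |f a - f b| ≤
          (Real.sqrt ε * (Real.log (1 + |a| + |b|)) ^ ((1 : ℝ) / 2) + C) * |a - b| := by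
  intro ε hε
  obtain ⟨S, hS, hd⟩ := h (Real.sqrt ε) (Real.sqrt_pos.mpr hε)
  have hcont : Continuous (deriv f) := hf.continuous_deriv le_rfl
  have hdiff : Differentiable ℝ f := hf.differentiable one_ne_zero
  obtain ⟨M, hM⟩ := (isCompact_Icc (a := -S) (b := S)).exists_bound_of_continuousOn
    hcont.continuousOn
  refine ⟨|M| + 1, by positivity, fun a b => ?_⟩
  have key : ∀ x ∈ Set.uIcc b a, ‖deriv f x‖ ≤
      Real.sqrt ε * (Real.log (1 + |a| + |b|)) ^ ((1 : ℝ) / 2) + (|M| + 1) := by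
    intro x hx
    have hlog : 0 ≤ Real.log (1 + |a| + |b|) :=
      Real.log_nonneg (by linarith [abs_nonneg a, abs_nonneg b])
    have hxab : |x| ≤ |a| + |b| := by
      rw [Set.mem_uIcc] at hx
      rw [abs_le]
      have h1 := neg_abs_le a
      have h2 := neg_abs_le b
      have h3 := le_abs_self a
      have h4 := le_abs_self b
      rcases hx with hx | hx <;> constructor <;> linarith [hx.1, hx.2, abs_nonneg a, abs_nonneg b]
    by_cases hxS : S ≤ |x|
    · have h1 := hd x hxS
      have h2 : (Real.log |x|) ^ ((1 : ℝ) / 2) ≤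
          (Real.log (1 + |a| + |b|)) ^ ((1 : ℝ) / 2) :=
        Real.rpow_le_rpow (Real.log_nonneg (by linarith))
          (Real.log_le_log (by linarith) (by linarith)) (by norm_num)
      have h3 := mul_le_mul_of_nonneg_left h2 (Real.sqrt_nonneg ε)
      rw [Real.norm_eq_abs]
      linarith [abs_nonneg M]
    · have h1 := hM x (abs_le.mp (not_le.mp hxS).le)
      have h2 : 0 ≤ Real.sqrt ε * (Real.log (1 + |a| + |b|)) ^ ((1 : ℝ) / 2) :=
        mul_nonneg (Real.sqrt_nonneg ε) (Real.rpow_nonneg hlog _)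
      linarith [le_abs_self M]
  exact (convex_uIcc b a).norm_image_sub_le_of_norm_deriv_le (fun x _ => hdiff x) key
    Set.left_mem_uIcc Set.right_mem_uIcc
end

section
/- Let n ≥ 1, let U be an open subset of EuclideanSpace ℝ (Fin n), let τ ∈ ℝ, let q : EuclideanSpace ℝ (Fin n) × ℝ → ℂ, let η : EuclideanSpace ℝ (Fin n) → ℝ be twice continuously differentiable on U with ∑_{i} (∂_i η(x))² = 1 for all x ∈ U (eikonal equation), and let a : EuclideanSpace ℝ (Fin n) × ℝ → ℂ be twice continuously differentiable. Assume a satisfies the transport equation 2 ∂_t a(x,t) − 2 ∑_i ∂_i η(x) · ∂_i a(x,t) − (∑_i ∂_i∂_i η(x)) · a(x,t) = 0 for all (x,t) ∈ U × ℝ. Then the function v(x,t) = Complex.exp (Complex.I · τ · (η(x) + t)) · a(x,t) satisfies, for all (x,t) ∈ U × ℝ, ∂_t∂_t v − ∑_i ∂_i∂_i v + q·v = Complex.exp (Complex.I · τ · (η(x) + t)) · (∂_t∂_t a − ∑_i ∂_i∂_i a + q·a). -/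
/-- Spatial directional derivative `∂ᵢ` of a complex-valued function of `(x,t)`. -/
noncomputable def pdC {n : ℕ} (i : Fin n) (g : EuclideanSpace ℝ (Fin n) × ℝ → ℂ) :
    EuclideanSpace ℝ (Fin n) × ℝ → ℂ :=
  fun p => fderiv ℝ (fun y => g (y, p.2)) p.1 (EuclideanSpace.single i 1)

/-- Time derivative `∂ₜ` of a complex-valued function of `(x,t)`. -/
noncomputable def tdC {n : ℕ} (g : EuclideanSpace ℝ (Fin n) × ℝ → ℂ) :
    EuclideanSpace ℝ (Fin n) × ℝ → ℂ :=
  fun p => deriv (fun s => g (p.1, s)) p.2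

/-- Spatial directional derivative `∂ᵢ` of a real-valued function of `x`. -/
noncomputable def pdR {n : ℕ} (i : Fin n) (g : EuclideanSpace ℝ (Fin n) → ℝ) :
    EuclideanSpace ℝ (Fin n) → ℝ :=
  fun x => fderiv ℝ g x (EuclideanSpace.single i 1)

theorem aux1 {F : Type*} [NormedAddCommGroup F] [NormedSpace ℝ F] (τ : ℝ) (e : F)
    (θ : F → ℝ) (b : F → ℂ) (x : F) (hθ : DifferentiableAt ℝ θ x) (hb : DifferentiableAt ℝ b x) :
    fderiv ℝ (fun y => Complex.exp (Complex.I * (τ : ℂ) * (θ y : ℂ)) * b y) x e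
      = Complex.exp (Complex.I * (τ : ℂ) * (θ x : ℂ)) *
        (fderiv ℝ b x e + Complex.I * (τ : ℂ) * (fderiv ℝ θ x e : ℂ) * b x) := by
  have h1 : HasFDerivAt (fun y => (θ y : ℂ)) (Complex.ofRealCLM.comp (fderiv ℝ θ x)) x :=
    Complex.ofRealCLM.hasFDerivAt.comp x hθ.hasFDerivAt
  have h2 := ((h1.const_mul (Complex.I * (τ : ℂ))).cexp).mul hb.hasFDerivAt
  have h3 := congrArg (fun L => L e) h2.fderiv
  refine Eq.trans h3 ?_
  simp
  ring

theorem aux2 {F : Type*} [NormedAddCommGroup F] [NormedSpace ℝ F] (τ : ℝ) (e : F)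
    (θ : F → ℝ) (b : F → ℂ) (U : Set F) (hU : IsOpen U) (hθ : ContDiffOn ℝ 2 θ U)
    (hb : ContDiffOn ℝ 2 b U) (x : F) (hx : x ∈ U) :
    fderiv ℝ (fun z => fderiv ℝ
        (fun y => Complex.exp (Complex.I * (τ : ℂ) * (θ y : ℂ)) * b y) z e) x e
      = Complex.exp (Complex.I * (τ : ℂ) * (θ x : ℂ)) *
        (fderiv ℝ (fun z => fderiv ℝ b z e) x e
          + 2 * (Complex.I * (τ : ℂ)) * (fderiv ℝ θ x e : ℂ) * fderiv ℝ b x e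
          + Complex.I * (τ : ℂ) * (fderiv ℝ (fun z => fderiv ℝ θ z e) x e : ℂ) * b x
          - (τ : ℂ) ^ 2 * (fderiv ℝ θ x e : ℂ) ^ 2 * b x) := by
  have dθ : ∀ y ∈ U, DifferentiableAt ℝ θ y := fun y hy =>
    (hθ.contDiffAt (hU.mem_nhds hy)).differentiableAt (by norm_num)
  have db : ∀ y ∈ U, DifferentiableAt ℝ b y := fun y hy =>
    (hb.contDiffAt (hU.mem_nhds hy)).differentiableAt (by norm_num)
  have dθ2 : DifferentiableAt ℝ (fun z => fderiv ℝ θ z e) x :=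
    (((hθ.contDiffAt (hU.mem_nhds hx)).fderiv_right (m := 1) (by norm_num)).differentiableAt
      (by norm_num)).clm_apply (differentiableAt_const e)
  have db2 : DifferentiableAt ℝ (fun z => fderiv ℝ b z e) x :=
    (((hb.contDiffAt (hU.mem_nhds hx)).fderiv_right (m := 1) (by norm_num)).differentiableAt
      (by norm_num)).clm_apply (differentiableAt_const e)
  have hev : (fun z => fderiv ℝ
        (fun y => Complex.exp (Complex.I * (τ : ℂ) * (θ y : ℂ)) * b y) z e) =ᶠ[nhds x]
      fun z => Complex.exp (Complex.I * (τ : ℂ) * (θ z : ℂ)) *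
        (fderiv ℝ b z e + Complex.I * (τ : ℂ) * (fderiv ℝ θ z e : ℂ) * b z) := by
    filter_upwards [hU.mem_nhds hx] with z hz
    exact aux1 τ e θ b z (dθ z hz) (db z hz)
  have h1 : HasFDerivAt (fun y => ((fderiv ℝ θ y e : ℝ) : ℂ))
      (Complex.ofRealCLM.comp (fderiv ℝ (fun z => fderiv ℝ θ z e) x)) x :=
    Complex.ofRealCLM.hasFDerivAt.comp x dθ2.hasFDerivAt
  have h2 := db2.hasFDerivAt.add
    ((h1.const_mul (Complex.I * (τ : ℂ))).mul (db x hx).hasFDerivAt)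
  have h3 := congrArg (fun L => L e) h2.fderiv
  have h4 : fderiv ℝ (fun z => fderiv ℝ b z e
      + Complex.I * (τ : ℂ) * (fderiv ℝ θ z e : ℂ) * b z) x e = _ := h3
  rw [hev.fderiv_eq, aux1 τ e θ (fun z => fderiv ℝ b z e
      + Complex.I * (τ : ℂ) * (fderiv ℝ θ z e : ℂ) * b z) x (dθ x hx) h2.differentiableAt, h4]
  simp
  linear_combination ((τ : ℂ) ^ 2 *
    (fderiv ℝ θ x e : ℂ) ^ 2 * b x) * Complex.I_sq

/-- Conjugation identity for CGO solutions: if `η` solves the eikonal equation `|∇η|² = 1`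
on `U` and `a` solves the transport equation `2a_t − 2∇η·∇a − (Δη)a = 0` on `U × ℝ`, then
`v = e^{iτ(η(x)+t)} a` satisfies `v_tt − Δv + qv = e^{iτ(η(x)+t)} (a_tt − Δa + qa)`
on `U × ℝ`. -/
theorem stmt_11 (n : ℕ) (hn : 1 ≤ n) (U : Set (EuclideanSpace ℝ (Fin n))) (hU : IsOpen U)
    (τ : ℝ) (q : EuclideanSpace ℝ (Fin n) × ℝ → ℂ)
    (η : EuclideanSpace ℝ (Fin n) → ℝ) (hη : ContDiffOn ℝ 2 η U)
    (heik : ∀ x ∈ U, ∑ i : Fin n, (pdR i η x) ^ 2 = 1)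
    (a : EuclideanSpace ℝ (Fin n) × ℝ → ℂ) (ha : ContDiff ℝ 2 a)
    (htrans : ∀ x ∈ U, ∀ t : ℝ,
      2 * tdC a (x, t) - 2 * ∑ i : Fin n, (pdR i η x : ℂ) * pdC i a (x, t)
        - (↑(∑ i : Fin n, pdR i (pdR i η) x) : ℂ) * a (x, t) = 0)
    (v : EuclideanSpace ℝ (Fin n) × ℝ → ℂ)
    (hv : v = fun p => Complex.exp (Complex.I * (τ : ℂ) * ((η p.1 : ℂ) + (p.2 : ℂ))) * a p) :
    ∀ x ∈ U, ∀ t : ℝ,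
      tdC (tdC v) (x, t) - (∑ i : Fin n, pdC i (pdC i v) (x, t)) + q (x, t) * v (x, t)
        = Complex.exp (Complex.I * (τ : ℂ) * ((η x : ℂ) + (t : ℂ))) *
            (tdC (tdC a) (x, t) - (∑ i : Fin n, pdC i (pdC i a) (x, t))
              + q (x, t) * a (x, t)) := by
  intro x hx t
  have hs : ∀ i : Fin n, pdC i (pdC i v) (x, t) =
      Complex.exp (Complex.I * (τ : ℂ) * ((η x : ℂ) + (t : ℂ))) *
        (pdC i (pdC i a) (x, t)
          + 2 * (Complex.I * (τ : ℂ)) * ((pdR i η x : ℂ) * pdC i a (x, t))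
          + Complex.I * (τ : ℂ) * a (x, t) * (pdR i (pdR i η) x : ℂ)
          - (τ : ℂ) ^ 2 * a (x, t) * (pdR i η x : ℂ) ^ 2) := by
    intro i
    have h := aux2 τ (EuclideanSpace.single i (1 : ℝ)) (fun y => η y + t) (fun y => a (y, t)) U hU
      (hη.add contDiffOn_const)
      (ha.comp (contDiff_id.prodMk contDiff_const)).contDiffOn x hx
    simp only [fderiv_add_const, Complex.ofReal_add] at h
    subst hv
    refine Eq.trans h ?_
    have hp : pdR i η = fun z => fderiv ℝ η z (EuclideanSpace.single i 1) := rfl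
    simp only [pdC, hp]
    simp only [pdR]
    ring
  have ht : tdC (tdC v) (x, t) =
      Complex.exp (Complex.I * (τ : ℂ) * ((η x : ℂ) + (t : ℂ))) *
        (tdC (tdC a) (x, t) + 2 * (Complex.I * (τ : ℂ)) * tdC a (x, t)
          - (τ : ℂ) ^ 2 * a (x, t)) := by
    have h := aux2 τ (1 : ℝ) (fun s => η x + s) (fun s => a (x, s)) Set.univ isOpen_univ
      (contDiff_const.add contDiff_id).contDiffOn
      (ha.comp (contDiff_const.prodMk contDiff_id)).contDiffOn t (Set.mem_univ t)
    simp only [Complex.ofReal_add, fderiv_apply_one_eq_deriv] at h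
    subst hv
    refine Eq.trans h ?_
    simp [tdC]
  have he : (∑ i : Fin n, (pdR i η x : ℂ) ^ 2) = 1 := by exact_mod_cast heik x hx
  have htr := htrans x hx t
  rw [Complex.ofReal_sum] at htr
  rw [ht, Finset.sum_congr rfl (fun i _ => hs i), ← Finset.mul_sum, Finset.sum_sub_distrib,
    Finset.sum_add_distrib, Finset.sum_add_distrib, ← Finset.mul_sum, ← Finset.mul_sum,
    ← Finset.mul_sum, he]
  subst hv
  linear_combination (Complex.exp (Complex.I * (τ : ℂ) * ((η x : ℂ) + (t : ℂ))) *
    (Complex.I * (τ : ℂ))) * htr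
end
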